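/- arXiv:2501.04852 — 2 statements merged into one kernel-verified Lean document; each statement's English description precedes it below -/
import Mathlib

section
/- None of the following ideals of 𝓡 is self-dual: the zero ideal ⟨0⟩, the unit ideal ⟨1⟩ = 𝓡, and ⟨u²(x+1)^τ⟩ for any integer 0 ≤ τ ≤ 2^s − 1. (There are no self-dual cyclic codes of Type 1 or Type 2.) -/
noncomputable section

open Polynomial

/-- The finite field `GF(2^m)`. -/
abbrev Fq (m : ℕ) : Type := GaloisField 2 m

/-- The ring `R₃ = F[u]/⟨u³⟩`. -/
abbrev R3 (m : ℕ) : Type := AdjoinRoot (X ^ 3 : (Fq m)[X])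

/-- The polynomial `x^{2^s} + 1` over `R₃`. -/
abbrev gR (m s : ℕ) : (R3 m)[X] := X ^ (2 ^ s) + 1

/-- The polynomial `x^{2^s} + 1` over `F`. -/
abbrev gK (m s : ℕ) : (Fq m)[X] := X ^ (2 ^ s) + 1

/-- The ring `𝓡 = R₃[x]/⟨x^{2^s}+1⟩`. -/
abbrev RR (m s : ℕ) : Type := AdjoinRoot (gR m s)

/-- The ring `𝓚 = F[x]/⟨x^{2^s}+1⟩`. -/
abbrev KK (m s : ℕ) : Type := AdjoinRoot (gK m s)

/-- The element `u` of `R₃`. -/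
def uu (m : ℕ) : R3 m := AdjoinRoot.root _

/-- The element `u` of `𝓡`. -/
def uR (m s : ℕ) : RR m s := algebraMap (R3 m) (RR m s) (uu m)

/-- The element `x` of `𝓡`. -/
def xR (m s : ℕ) : RR m s := AdjoinRoot.root _

/-- The element `x` of `𝓚`. -/
def xK (m s : ℕ) : KK m s := AdjoinRoot.root _

lemma gR_monic (m s : ℕ) : (gR m s).Monic := by
  have h : (gR m s) = X ^ (2 ^ s) + C 1 := by simp [gR]
  rw [h]; exact monic_X_pow_add_C _ (by positivity)

lemma gK_monic (m s : ℕ) : (gK m s).Monic := by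
  have h : (gK m s) = X ^ (2 ^ s) + C 1 := by simp [gK]
  rw [h]; exact monic_X_pow_add_C _ (by positivity)

/-- The standard representative (of degree `< 2^s`) of an element of `𝓡`. -/
def repR (m s : ℕ) (c : RR m s) : (R3 m)[X] := AdjoinRoot.modByMonicHom (gR_monic m s) c

/-- The standard representative (of degree `< 2^s`) of an element of `𝓚`. -/
def repK (m s : ℕ) (c : KK m s) : (Fq m)[X] := AdjoinRoot.modByMonicHom (gK_monic m s) c

/-- The `j`-th coefficient of the standard representative of `c ∈ 𝓡`. -/
def coeffR (m s : ℕ) (c : RR m s) (j : ℕ) : R3 m := (repR m s c).coeff j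

/-- The dot product on `𝓡`. -/
def dotR (m s : ℕ) (c d : RR m s) : R3 m :=
  ∑ j ∈ Finset.range (2 ^ s), coeffR m s c j * coeffR m s d j

/-- The dual of a set of codewords. -/
def dualSet (m s : ℕ) (S : Set (RR m s)) : Set (RR m s) :=
  {c | ∀ d ∈ S, dotR m s c d = 0}

/-- A cyclic code (ideal of `𝓡`) is self-dual if it coincides with its dual. -/
def IsSelfDual (m s : ℕ) (C : Ideal (RR m s)) : Prop :=
  (C : Set (RR m s)) = dualSet m s (C : Set (RR m s))

/-- The annihilator of a set of codewords. -/
def annSet (m s : ℕ) (S : Set (RR m s)) : Set (RR m s) :=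
  {c | ∀ d ∈ S, c * d = 0}

/-- The reciprocal `c*(x) = x^{deg c} c(x⁻¹)` of an element of `𝓡`. -/
def recip (m s : ℕ) (c : RR m s) : RR m s :=
  xR m s ^ (repR m s c).natDegree *
    Polynomial.aeval (Ring.inverse (xR m s)) (repR m s c)

/-- Reduction `R₃ → F` modulo `u`. -/
def epsR3 (m : ℕ) : R3 m →+* Fq m :=
  AdjoinRoot.lift (RingHom.id (Fq m)) 0 (by simp)

lemma xK_pow_add_one (m s : ℕ) : (xK m s) ^ (2 ^ s) + 1 = 0 := by
  have h := AdjoinRoot.eval₂_root (gK m s)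
  simpa [gK, xK] using h

lemma xR_pow_add_one (m s : ℕ) : (xR m s) ^ (2 ^ s) + 1 = 0 := by
  have h := AdjoinRoot.eval₂_root (gR m s)
  simpa [gR, xR] using h

/-- Reduction `μ : 𝓡 → 𝓚` modulo `u`. -/
def muRK (m s : ℕ) : RR m s →+* KK m s :=
  AdjoinRoot.lift ((algebraMap (Fq m) (KK m s)).comp (epsR3 m)) (xK m s) (by
    simp only [gR, eval₂_add, eval₂_pow, eval₂_X, eval₂_one]
    exact xK_pow_add_one m s)

/-- The natural inclusion `𝓚 → 𝓡`. -/
def KtoR (m s : ℕ) : KK m s →+* RR m s :=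
  AdjoinRoot.lift ((algebraMap (R3 m) (RR m s)).comp (algebraMap (Fq m) (R3 m))) (xR m s) (by
    simp only [gK, eval₂_add, eval₂_pow, eval₂_X, eval₂_one]
    exact xR_pow_add_one m s)

/-- The `i`-th torsion code of a set `S ⊆ 𝓡`. -/
def TorSet (m s : ℕ) (S : Set (RR m s)) (i : ℕ) : Set (KK m s) :=
  muRK m s '' {f | (uR m s) ^ i * f ∈ S}

/-- The torsion degree `T_i`: the (unique) `k` with `Tor_i = ⟨(x+1)^k⟩`. -/
def Tdeg (m s : ℕ) (S : Set (RR m s)) (i : ℕ) : ℕ :=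
  sInf {k | TorSet m s S i =
    ((Ideal.span {(xK m s + 1) ^ k} : Ideal (KK m s)) : Set (KK m s))}

/-- Substitution `h(x) ↦ h(x⁻¹)` on `𝓚`. -/
def invSub (m s : ℕ) (h : KK m s) : KK m s :=
  Polynomial.aeval (Ring.inverse (xK m s)) (repK m s h)


lemma uu_pow_three (m : ℕ) : uu m ^ 3 = 0 := by
  have h := AdjoinRoot.eval₂_root (X ^ 3 : (Fq m)[X])
  simpa [uu] using h

lemma uu_sq_ne (m : ℕ) : uu m ^ 2 ≠ 0 := by
  intro h
  have h1 : AdjoinRoot.mk (X ^ 3 : (Fq m)[X]) (X ^ 2) = 0 := by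
    simpa [uu] using h
  rw [AdjoinRoot.mk_eq_zero] at h1
  have := (pow_dvd_pow_iff (X_ne_zero (R := Fq m)) not_isUnit_X).1 h1
  omega

lemma R3_nontrivial (m : ℕ) : Nontrivial (R3 m) := ⟨⟨_, _, uu_sq_ne m⟩⟩

lemma gR_degree_pos (m s : ℕ) : 0 < (gR m s).degree := by
  haveI := R3_nontrivial m
  have h : (gR m s) = X ^ (2 ^ s) + C 1 := by simp [gR]
  rw [h, degree_X_pow_add_C (by positivity)]
  exact_mod_cast (by positivity : 0 < 2 ^ s)

lemma coeffR_smul (m s : ℕ) (a : R3 m) (c : RR m s) (j : ℕ) :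
    coeffR m s (algebraMap (R3 m) (RR m s) a * c) j = a * coeffR m s c j := by
  rw [← Algebra.smul_def]
  unfold coeffR repR
  rw [map_smul, coeff_smul, smul_eq_mul]

lemma repR_one (m s : ℕ) : repR m s 1 = 1 := by
  haveI := R3_nontrivial m
  unfold repR
  rw [← map_one (AdjoinRoot.mk (gR m s)), AdjoinRoot.modByMonicHom_mk,
    modByMonic_eq_self_iff (gR_monic m s), degree_one]
  exact gR_degree_pos m s

lemma dot_one_one (m s : ℕ) : dotR m s 1 1 = 1 := by
  unfold dotR coeffR
  rw [repR_one, Finset.sum_eq_single 0]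
  · simp
  · intro j _ hj
    simp [coeff_one, hj]
  · intro h
    simp at h

lemma not_selfDual_of_le (m s : ℕ) (C : Ideal (RR m s))
    (hC : C ≤ Ideal.span {uR m s ^ 2}) : ¬ IsSelfDual m s C := by
  intro h
  have hu : uR m s ∈ dualSet m s (C : Set (RR m s)) := by
    intro d hd
    obtain ⟨e, rfl⟩ := Ideal.mem_span_singleton.1 (hC hd)
    refine Finset.sum_eq_zero fun j _ => ?_
    have h1 : coeffR m s (uR m s) j = uu m * coeffR m s 1 j := by
      rw [← coeffR_smul, mul_one, uR]
    have h2 : coeffR m s (uR m s ^ 2 * e) j = uu m ^ 2 * coeffR m s e j := by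
      rw [← coeffR_smul, map_pow, uR]
    rw [h1, h2]
    linear_combination (coeffR m s 1 j * coeffR m s e j) * uu_pow_three m
  unfold IsSelfDual at h
  rw [← h] at hu
  obtain ⟨e, he⟩ := Ideal.mem_span_singleton.1 (hC hu)
  have h3 : uR m s ^ 3 = 0 := by
    rw [uR, ← map_pow, uu_pow_three, map_zero]
  have h4 : algebraMap (R3 m) (RR m s) (uu m ^ 2) * 1 = 0 := by
    rw [map_pow]
    change uR m s ^ 2 * 1 = 0
    linear_combination uR m s * he + e * h3
  have h5 := coeffR_smul m s (uu m ^ 2) 1 0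
  rw [h4] at h5
  simp only [coeffR, repR_one, coeff_one_zero, mul_one] at h5
  apply uu_sq_ne m
  rw [← h5]
  simp [repR]

/-- No ideal of Type 1 (`⟨0⟩`, `⟨1⟩`) or Type 2 (`⟨u²(x+1)^τ⟩`) is self-dual. -/
theorem stmt3 (m s : ℕ) (hm : 0 < m) (hs : 0 < s) :
    ¬ IsSelfDual m s (⊥ : Ideal (RR m s)) ∧
    ¬ IsSelfDual m s (⊤ : Ideal (RR m s)) ∧
    ∀ τ : ℕ, τ ≤ 2 ^ s - 1 →
      ¬ IsSelfDual m s (Ideal.span {uR m s ^ 2 * (xR m s + 1) ^ τ}) := by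
  refine ⟨not_selfDual_of_le m s _ bot_le, ?_, fun τ _ => not_selfDual_of_le m s _ ?_⟩
  · intro h
    haveI := R3_nontrivial m
    have h1 : (1 : RR m s) ∈ ((⊤ : Ideal (RR m s)) : Set (RR m s)) := Submodule.mem_top
    have h2 := h1
    unfold IsSelfDual at h
    rw [h] at h2
    have h3 := h2 1 h1
    rw [dot_one_one] at h3
    exact one_ne_zero h3
  · rw [Ideal.span_singleton_le_span_singleton]
    exact Dvd.intro _ rfl
end
end

section
/- Let 1 ≤ a ≤ 2^s − 1 and let C be an ideal of 𝓡 with Tor_0(C) = ⟨(x+1)^a⟩, Tor_1(C) = ⟨(x+1)^{2^{s-1}}⟩ and Tor_2(C) = ⟨(x+1)^{2^s−a}⟩. Suppose there exist f₁, f₂, f₃ ∈ 𝓚 such that (x+1)^a + u f₁(x) + u² f₂(x) ∈ 𝒜(C) and u(x+1)^{2^{s-1}} + u² f₃(x) ∈ 𝒜(C). Then 𝒜(C) = ⟨(x+1)^a + u f₁(x) + u² f₂(x), u(x+1)^{2^{s-1}} + u² f₃(x), u²(x+1)^{2^s−a}⟩. -/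
noncomputable section

open Polynomial

lemma h_uR_cube (m s : ℕ) : uR m s ^ 3 = 0 := by
  have h : (uu m) ^ 3 = 0 := by
    have h := AdjoinRoot.eval₂_root (X ^ 3 : (Fq m)[X])
    simpa [uu] using h
  rw [uR, ← map_pow, h, map_zero]

lemma h_mu_u (m s : ℕ) : muRK m s (uR m s) = 0 := by
  have : uR m s = AdjoinRoot.of (gR m s) (uu m) := rfl
  rw [this, muRK, AdjoinRoot.lift_of]
  simp [uu, epsR3]

lemma h_mu_x (m s : ℕ) : muRK m s (xR m s) = xK m s := by
  rw [xR, muRK, AdjoinRoot.lift_root]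

lemma h_K_x (m s : ℕ) : KtoR m s (xK m s) = xR m s := by
  rw [xK, KtoR, AdjoinRoot.lift_root]

lemma h_K_of (m s : ℕ) (c : Fq m) : KtoR m s (AdjoinRoot.of (gK m s) c) =
    AdjoinRoot.of (gR m s) (AdjoinRoot.of (X ^ 3 : (Fq m)[X]) c) := by
  rw [KtoR, AdjoinRoot.lift_of]; rfl

lemma h_mu_of (m s : ℕ) (c : R3 m) : muRK m s (AdjoinRoot.of (gR m s) c) =
    AdjoinRoot.of (gK m s) (epsR3 m c) := by
  rw [muRK, AdjoinRoot.lift_of]; rfl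

lemma h_eps_of (m : ℕ) (c : Fq m) : epsR3 m (AdjoinRoot.of (X ^ 3 : (Fq m)[X]) c) = c := by
  rw [epsR3, AdjoinRoot.lift_of]; rfl

lemma h_mu_K (m s : ℕ) (f : KK m s) : muRK m s (KtoR m s f) = f := by
  have : (muRK m s).comp (KtoR m s) = RingHom.id _ := by
    apply AdjoinRoot.ringHom_ext
    · ext c
      simp only [RingHom.comp_apply, RingHom.id_apply]
      rw [h_K_of, h_mu_of, h_eps_of]
    · show muRK m s (KtoR m s (xK m s)) = xK m s
      rw [h_K_x, h_mu_x]
  exact congrArg (fun φ : KK m s →+* KK m s => φ f) this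

lemma h_decomp (m s : ℕ) (z : RR m s) : ∃ w, z = KtoR m s (muRK m s z) + uR m s * w := by
  have : ((Ideal.Quotient.mk (Ideal.span {uR m s})).comp ((KtoR m s).comp (muRK m s))) =
      Ideal.Quotient.mk (Ideal.span {uR m s}) := by
    apply AdjoinRoot.ringHom_ext
    · apply AdjoinRoot.ringHom_ext
      · apply RingHom.ext
        intro c
        simp only [RingHom.comp_apply]
        rw [h_mu_of, h_eps_of, h_K_of]
      · show Ideal.Quotient.mk (Ideal.span {uR m s}) (KtoR m s (muRK m s (uR m s))) =
          Ideal.Quotient.mk (Ideal.span {uR m s}) (uR m s)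
        rw [h_mu_u, map_zero, map_zero, eq_comm, Ideal.Quotient.eq_zero_iff_mem]
        exact Ideal.mem_span_singleton_self _
    · show Ideal.Quotient.mk (Ideal.span {uR m s}) (KtoR m s (muRK m s (xR m s))) =
          Ideal.Quotient.mk (Ideal.span {uR m s}) (xR m s)
      rw [h_mu_x, h_K_x]
  have h2 := congrArg (fun φ : RR m s →+* _ => φ z) this
  simp only [RingHom.comp_apply] at h2
  have h3 := Ideal.mem_span_singleton.1 (Ideal.Quotient.eq.1 h2.symm)
  obtain ⟨w, hw⟩ := h3
  exact ⟨w, by rw [← hw]; ring⟩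

lemma h_u2_field (m : ℕ) (c : Fq m)
    (h : uu m ^ 2 * AdjoinRoot.of (X ^ 3 : (Fq m)[X]) c = 0) : c = 0 := by
  have h1 : AdjoinRoot.mk (X ^ 3 : (Fq m)[X]) (X ^ 2 * C c) = 0 := by
    rw [map_mul, map_pow, AdjoinRoot.mk_X, AdjoinRoot.mk_C]; exact h
  rw [AdjoinRoot.mk_eq_zero, X_pow_dvd_iff] at h1
  have := h1 2 (by norm_num)
  simpa [coeff_X_pow_mul'] using this

lemma h_u2_K (m s : ℕ) (f : KK m s) (h : uR m s ^ 2 * KtoR m s f = 0) : f = 0 := by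
  obtain ⟨p0, rfl⟩ := AdjoinRoot.mk_surjective f
  have hmod : AdjoinRoot.mk (gK m s) p0 = AdjoinRoot.mk (gK m s) (p0 %ₘ gK m s) := by
    rw [AdjoinRoot.mk_eq_mk]
    exact ⟨p0 /ₘ gK m s, by
      have := modByMonic_add_div p0 (gK m s)
      linear_combination -this⟩
  rw [hmod] at h ⊢
  have hdeg := degree_modByMonic_lt p0 (gK_monic m s)
  generalize p0 %ₘ gK m s = p at h hdeg ⊢
  have hK : KtoR m s (AdjoinRoot.mk (gK m s) p) =
      AdjoinRoot.mk (gR m s) (p.map (AdjoinRoot.of (X ^ 3 : (Fq m)[X]))) := by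
    clear h hdeg
    have hh : (KtoR m s).comp (AdjoinRoot.mk (gK m s)) = (AdjoinRoot.mk (gR m s)).comp
        (mapRingHom (AdjoinRoot.of (X ^ 3 : (Fq m)[X]))) := by
      apply Polynomial.ringHom_ext
      · intro c
        simp only [RingHom.comp_apply, coe_mapRingHom, map_C, AdjoinRoot.mk_C]
        exact h_K_of m s c
      · simp only [RingHom.comp_apply, coe_mapRingHom, map_X, AdjoinRoot.mk_X]
        exact h_K_x m s
    exact congrArg (fun φ : (Fq m)[X] →+* RR m s => φ p) hh
  have h1 : AdjoinRoot.mk (gR m s)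
      (C (uu m ^ 2) * p.map (AdjoinRoot.of (X ^ 3 : (Fq m)[X]))) = 0 := by
    rw [map_mul, ← hK, AdjoinRoot.mk_C, map_pow]; exact h
  rw [AdjoinRoot.mk_eq_zero] at h1
  have hKd : (gK m s).degree = (2 ^ s : ℕ) := by
    have := degree_X_pow_add_C (R := Fq m) (n := 2 ^ s) (by positivity) 1
    simpa [gK] using this
  have hRd : (gR m s).degree = (2 ^ s : ℕ) := by
    have : Nontrivial (R3 m) := (epsR3 m).domain_nontrivial
    have := degree_X_pow_add_C (R := R3 m) (n := 2 ^ s) (by positivity) 1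
    simpa [gR] using this
  have hz : C (uu m ^ 2) * p.map (AdjoinRoot.of (X ^ 3 : (Fq m)[X])) = 0 := by
    by_contra hne
    refine (gR_monic m s).not_dvd_of_degree_lt hne ?_ h1
    rw [hRd, ← hKd]
    refine lt_of_le_of_lt ?_ hdeg
    refine le_trans ?_ (degree_map_le (f := AdjoinRoot.of (X ^ 3 : (Fq m)[X])) (p := p))
    rw [← smul_eq_C_mul]
    exact degree_smul_le _ _
  have : p = 0 := by
    ext j
    apply h_u2_field
    have := congrArg (fun q => q.coeff j) hz
    simpa only [coeff_C_mul, coeff_map, coeff_zero] using this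
  rw [this, map_zero]

lemma h_u2 (m s : ℕ) (z : RR m s) (h : uR m s ^ 2 * z = 0) : muRK m s z = 0 := by
  obtain ⟨w, hw⟩ := h_decomp m s z
  apply h_u2_K
  linear_combination h - uR m s ^ 2 * hw - w * h_uR_cube m s

lemma h_gK (m s : ℕ) : gK m s = (X + 1) ^ (2 ^ s) := by
  rw [add_pow_char_pow, one_pow]

lemma h_K_ann (m s i j : ℕ) (hij : i + j = 2 ^ s) (f : KK m s)
    (h : f * (xK m s + 1) ^ i = 0) : ∃ g, f = g * (xK m s + 1) ^ j := by
  obtain ⟨p, rfl⟩ := AdjoinRoot.mk_surjective f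
  have hx : xK m s + 1 = AdjoinRoot.mk (gK m s) (X + 1) := by
    rw [map_add, AdjoinRoot.mk_X, map_one]; rfl
  rw [hx, ← map_pow, ← map_mul, AdjoinRoot.mk_eq_zero, h_gK, ← hij, add_comm i j, pow_add] at h
  have hne : ((X + 1 : (Fq m)[X]) ^ i) ≠ 0 := by
    have := (monic_X_add_C (1 : Fq m)).ne_zero
    rw [C_1] at this
    exact pow_ne_zero _ this
  obtain ⟨q, hq⟩ := (mul_dvd_mul_iff_right hne).1 h
  refine ⟨AdjoinRoot.mk _ q, ?_⟩
  rw [hx, ← map_pow, ← map_mul, hq, mul_comm]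

lemma h_xR_nil (m s i j : ℕ) (hij : i + j = 2 ^ s) :
    (xR m s + 1) ^ i * (xR m s + 1) ^ j = 0 := by
  have hx : xK m s + 1 = AdjoinRoot.mk (gK m s) (X + 1) := by
    rw [map_add, AdjoinRoot.mk_X, map_one]; rfl
  have h0 : (xK m s + 1) ^ (2 ^ s) = 0 := by
    rw [hx, ← map_pow, ← h_gK, AdjoinRoot.mk_self]
  have := congrArg (KtoR m s) h0
  rw [map_pow, map_add, map_one, map_zero, h_K_x] at this
  rw [← pow_add, hij, this]

/-- If `C` is an ideal of `𝓡` with the prescribed torsion codes and the two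
displayed elements lie in `𝒜(C)`, then `𝒜(C)` is the ideal generated by them together
with `u²(x+1)^{2^s−a}`. -/
theorem stmt6 (m s : ℕ) (hm : 0 < m) (hs : 0 < s)
    (a : ℕ) (ha1 : 1 ≤ a) (ha2 : a ≤ 2 ^ s - 1)
    (C : Ideal (RR m s))
    (hT0 : TorSet m s (C : Set (RR m s)) 0 =
      ((Ideal.span {(xK m s + 1) ^ a} : Ideal (KK m s)) : Set (KK m s)))
    (hT1 : TorSet m s (C : Set (RR m s)) 1 =
      ((Ideal.span {(xK m s + 1) ^ (2 ^ (s - 1))} : Ideal (KK m s)) : Set (KK m s)))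
    (hT2 : TorSet m s (C : Set (RR m s)) 2 =
      ((Ideal.span {(xK m s + 1) ^ (2 ^ s - a)} : Ideal (KK m s)) : Set (KK m s)))
    (f₁ f₂ f₃ : KK m s)
    (hf12 : (xR m s + 1) ^ a + uR m s * KtoR m s f₁ + uR m s ^ 2 * KtoR m s f₂ ∈
      annSet m s (C : Set (RR m s)))
    (hf3 : uR m s * (xR m s + 1) ^ (2 ^ (s - 1)) + uR m s ^ 2 * KtoR m s f₃ ∈
      annSet m s (C : Set (RR m s))) :
    annSet m s (C : Set (RR m s)) =
      ((Ideal.span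
        {(xR m s + 1) ^ a + uR m s * KtoR m s f₁ + uR m s ^ 2 * KtoR m s f₂,
         uR m s * (xR m s + 1) ^ (2 ^ (s - 1)) + uR m s ^ 2 * KtoR m s f₃,
         uR m s ^ 2 * (xR m s + 1) ^ (2 ^ s - a)} : Ideal (RR m s)) : Set (RR m s)) := by
  set u := uR m s with hu
  have hu3 : u ^ 3 = 0 := h_uR_cube m s
  set y := xR m s + 1 with hy
  have hKy : ∀ n, KtoR m s ((xK m s + 1) ^ n) = y ^ n := by
    intro n; rw [map_pow, map_add, map_one, h_K_x]
  have hmy : ∀ n, muRK m s (y ^ n) = (xK m s + 1) ^ n := by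
    intro n; rw [← hKy, h_mu_K]
  have hmu : muRK m s u = 0 := h_mu_u m s
  have hlt : 1 ≤ 2 ^ s := Nat.one_le_two_pow
  have haN : a + (2 ^ s - a) = 2 ^ s := by omega
  have hhalf : 2 ^ (s - 1) + 2 ^ (s - 1) = 2 ^ s := by
    obtain ⟨t, rfl⟩ : ∃ t, s = t + 1 := ⟨s - 1, by omega⟩
    simp [pow_succ]; ring
  obtain ⟨d0, hd0, hd0m⟩ : (xK m s + 1) ^ a ∈ TorSet m s (C : Set (RR m s)) 0 := by
    rw [hT0]; exact Ideal.mem_span_singleton_self _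
  obtain ⟨d1, hd1, hd1m⟩ : (xK m s + 1) ^ (2 ^ (s - 1)) ∈ TorSet m s (C : Set (RR m s)) 1 := by
    rw [hT1]; exact Ideal.mem_span_singleton_self _
  obtain ⟨d2, hd2, hd2m⟩ : (xK m s + 1) ^ (2 ^ s - a) ∈ TorSet m s (C : Set (RR m s)) 2 := by
    rw [hT2]; exact Ideal.mem_span_singleton_self _
  simp only [Set.mem_ofPred_eq, ← hu, pow_zero, one_mul, pow_one] at hd0 hd1 hd2
  set G1 := y ^ a + u * KtoR m s f₁ + u ^ 2 * KtoR m s f₂ with hG1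
  set G2 := u * y ^ (2 ^ (s - 1)) + u ^ 2 * KtoR m s f₃ with hG2
  have hf3' : u ^ 2 * y ^ (2 ^ s - a) ∈ annSet m s (C : Set (RR m s)) := by
    intro d hd
    have h1 : muRK m s d ∈ TorSet m s (C : Set (RR m s)) 0 := ⟨d, by simpa using hd, rfl⟩
    rw [hT0] at h1
    obtain ⟨g, hg⟩ := Ideal.mem_span_singleton.1 h1
    obtain ⟨w, hw⟩ := h_decomp m s d
    rw [hg, map_mul, hKy, ← hu] at hw
    have hn := h_xR_nil m s a (2 ^ s - a) haN
    rw [← hy] at hn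
    rw [hw]
    linear_combination u ^ 2 * KtoR m s g * hn + w * y ^ (2 ^ s - a) * hu3
  ext c
  constructor
  · intro hc
    rw [SetLike.mem_coe, Ideal.mem_span_insert]
    simp only [Ideal.mem_span_pair]
    obtain ⟨g1, hg1⟩ := h_K_ann m s (2 ^ s - a) a (by omega) (muRK m s c) (by
      rw [← hd2m, ← map_mul]
      apply h_u2
      have := hc _ hd2
      rw [← hu]
      linear_combination this)
    obtain ⟨w0, hw0⟩ := h_decomp m s c
    rw [hg1, map_mul, hKy, ← hu] at hw0
    obtain ⟨c1, hc1⟩ : ∃ c1, c1 = w0 - KtoR m s g1 * (KtoR m s f₁ + u * KtoR m s f₂) := ⟨_, rfl⟩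
    have e1 : c = KtoR m s g1 * G1 + u * c1 := by
      rw [hc1, hG1]; linear_combination hw0
    have hA1 : ∀ d ∈ C, u * c1 * d = 0 := by
      intro d hd
      linear_combination hc d hd - KtoR m s g1 * hf12 d hd - d * e1
    obtain ⟨g2, hg2⟩ := h_K_ann m s (2 ^ (s - 1)) (2 ^ (s - 1)) hhalf (muRK m s c1) (by
      rw [← hd1m, ← map_mul]
      apply h_u2
      have := hA1 _ hd1
      rw [← hu]
      linear_combination this)
    obtain ⟨w1, hw1⟩ := h_decomp m s c1
    rw [hg2, map_mul, hKy, ← hu] at hw1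
    obtain ⟨c2, hc2⟩ : ∃ c2, c2 = w1 - KtoR m s g2 * KtoR m s f₃ := ⟨_, rfl⟩
    have e2 : u * c1 = KtoR m s g2 * G2 + u ^ 2 * c2 := by
      rw [hc2, hG2]; linear_combination u * hw1
    have hA2 : ∀ d ∈ C, u ^ 2 * c2 * d = 0 := by
      intro d hd
      linear_combination hA1 d hd - KtoR m s g2 * hf3 d hd - d * e2
    obtain ⟨g3, hg3⟩ := h_K_ann m s a (2 ^ s - a) haN (muRK m s c2) (by
      rw [← hd0m, ← map_mul]
      apply h_u2
      have := hA2 _ hd0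
      rw [← hu]
      linear_combination this)
    obtain ⟨w2, hw2⟩ := h_decomp m s c2
    rw [hg3, map_mul, hKy, ← hu] at hw2
    refine ⟨KtoR m s g1, _, ⟨KtoR m s g2, KtoR m s g3, rfl⟩, ?_⟩
    linear_combination e1 + e2 + u ^ 2 * hw2 + w2 * hu3
  · intro hc
    rw [SetLike.mem_coe, Ideal.mem_span_insert] at hc
    simp only [Ideal.mem_span_pair] at hc
    obtain ⟨p, z, ⟨q, r, rfl⟩, rfl⟩ := hc
    intro d hd
    linear_combination p * hf12 d hd + q * hf3 d hd + r * hf3' d hd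
end
end
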